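/- Let n ≥ 2, let U ⊂ ℝⁿ be open, bounded and star-shaped with respect to a ball, and assume the operator 𝔸 is ℝ-elliptic. Then for every p ∈ [1, n/(n−1)) there exists a constant C_p > 0 (depending on p, U and 𝔸) such that ‖v‖_{L^p(U;ℝⁿ)} ≤ C_p ‖𝔸v‖_{L¹(U;M_sym)} for every v ∈ C¹_c(U;ℝⁿ). -/

import Mathlib

/-!
The estimate follows from a pointwise Riesz potential bound
`|v x| ≤ C ∫ |x - z|^(1-n) |𝔸v z| dz` for compactly supported `v`, a consequence of ellipticity,
combined with the integrability of powers of the kernel over the bounded set `U`.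

*Reproducing kernels.* Write `c m i j` for the `m`-th entry of `A_j e_i`, so that the symbol of
`𝔸` is the matrix `a ξ` with entries `∑ j, ξ j * c m i j`. Ellipticity gives the left inverse
`M = (aᵀa)⁻¹aᵀ`, smooth off the origin (`exists_smooth_left_inverse`). Let `χ` be a bump function
equal to `1` near `0` and `E = 𝓕⁻ χ`, so `∫ E = 1`. The field `y ↦ y E(y)` has divergence with
Fourier transform `-ξ·∇χ`, which vanishes near `0`; hence `(2πi)⁻¹ (-ξ·∇χ) M` is smooth with
compact support, and its inverse Fourier transforms are Schwartz functions `K` satisfying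
`δ_{ki} div(yE) = ∑ m, ∑ j, c m i j ∂_j K_{km}` (`exists_schwartz_kernels`). Working with these
instead of a fundamental solution keeps all kernels smooth and rapidly decreasing.

*Scaling.* For fixed `x` put `w(s) = ∫ E(y) v_k(x - s y) dy`. Then `w(0) = v_k(x)` and
`w(s) → 0` as `s → ∞`. Integrating the kernel identity by parts against `y ↦ v(x - s y)`
(`weak_identity`) shows that `w'(s)` is an average of `𝔸v`, with
`|w'(s)| ≤ C ∫ (s + |z|)^(-n) |𝔸v(x - z)| dz`. Integrating in `s` over `(0, ∞)` yields the Riesz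
bound (`pointwise_bound`).

*Conclusion.* By Jensen's inequality with respect to the measure `|𝔸v| dz` and Tonelli's theorem
(`lintegral_riesz_rpow_le`), the `L^p(U)` norm of the potential is controlled by `‖𝔸v‖_{L¹}`
times the `p`-th root of `∫_{|y|<ρ} |y|^{-(n-1)p} dy`, finite exactly because `(n-1) p < n`
(`lintegral_ball_rpow_lt_top`).
-/

open MeasureTheory

noncomputable section

/-- The Frobenius norm of an `n × n` array. -/
def frobNorm {n : ℕ} (M : Fin n → Fin n → ℝ) : ℝ := Real.sqrt (∑ i, ∑ j, (M i j) ^ 2)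

/-- The Euclidean norm of a vector in `ℝⁿ`. -/
def vecNorm {n : ℕ} (v : Fin n → ℝ) : ℝ := Real.sqrt (∑ i, (v i) ^ 2)

/-- The differential operator `𝔸 u (x) = ∑ j, A_j (∂_j u (x))`. -/
def Aop (n : ℕ) (A : Fin n → ((Fin n → ℝ) →ₗ[ℝ] (Fin n → Fin n → ℝ)))
    (u : (Fin n → ℝ) → (Fin n → ℝ)) (x : Fin n → ℝ) : Fin n → Fin n → ℝ :=
  ∑ j, A j (fderiv ℝ u x (Pi.single j 1))

/-- ℂ-ellipticity of `𝔸`: the complexified symbol `v ↦ ∑ j, z_j A_j^ℂ v` is injective for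
every `z ∈ ℂⁿ \ {0}`. -/
def CElliptic (n : ℕ) (A : Fin n → ((Fin n → ℝ) →ₗ[ℝ] (Fin n → Fin n → ℝ))) : Prop :=
  ∀ z : Fin n → ℂ, z ≠ 0 → ∀ v : Fin n → ℂ,
    (∀ k l, (∑ j, z j * ((A j (fun i => (v i).re) k l : ℂ)
        + Complex.I * (A j (fun i => (v i).im) k l : ℂ))) = 0) → v = 0

/-- `U` is star-shaped with respect to (each point of) a ball contained in it. -/
def StarShapedWrtBall (n : ℕ) (U : Set (Fin n → ℝ)) : Prop :=
  ∃ x₀ : Fin n → ℝ, ∃ r : ℝ, 0 < r ∧ Metric.ball x₀ r ⊆ U ∧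
    ∀ c ∈ Metric.ball x₀ r, StarConvex ℝ c U

/-! ### Left inverse of the symbol and the Schwartz kernels -/

open scoped ContDiff in
/-- A smooth family of matrices that is injective off the origin has a left inverse which is
smooth off the origin, namely `(aᵀa)⁻¹aᵀ`. -/
theorem exists_smooth_left_inverse {V κ ι : Type*} [NormedAddCommGroup V] [NormedSpace ℝ V]
    [Fintype κ] [Fintype ι] [DecidableEq ι] (a : V → Matrix κ ι ℝ)
    (ha : ∀ k i, ContDiff ℝ ∞ (fun ξ => a ξ k i))
    (hinj : ∀ ξ, ξ ≠ 0 → ∀ w, (a ξ).mulVec w = 0 → w = 0) :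
    ∃ M : V → Matrix ι κ ℝ, (∀ ξ, ξ ≠ 0 → M ξ * a ξ = 1) ∧
      ∀ i k ξ, ξ ≠ 0 → ContDiffAt ℝ ∞ (fun ξ => M ξ i k) ξ := by
  set S : V → Matrix ι ι ℝ := fun ξ => (a ξ).transpose * a ξ with hS
  have hSs : ∀ i j, ContDiff ℝ ∞ (fun ξ => S ξ i j) := by
    intro i j
    simp only [hS, Matrix.mul_apply, Matrix.transpose_apply]
    exact ContDiff.sum fun k _ => (ha k i).mul (ha k j)
  have hdet : ∀ T : V → Matrix ι ι ℝ, (∀ i j, ContDiff ℝ ∞ (fun ξ => T ξ i j)) →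
      ContDiff ℝ ∞ (fun ξ => (T ξ).det) := by
    intro T hT
    simp only [Matrix.det_apply]
    refine ContDiff.sum fun σ _ => ?_
    refine ContDiff.const_smul _ ?_
    exact contDiff_prod fun i _ => hT _ _
  have hadj : ∀ i j, ContDiff ℝ ∞ (fun ξ => (S ξ).adjugate i j) := by
    intro i j
    simp only [Matrix.adjugate_apply]
    apply hdet
    intro r s
    by_cases h : r = j
    · subst h
      simp only [Matrix.updateRow_self]
      exact contDiff_const
    · simp only [Matrix.updateRow_ne h]
      exact hSs r s
  have hne : ∀ ξ, ξ ≠ 0 → (S ξ).det ≠ 0 := by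
    intro ξ hξ h0
    obtain ⟨w, hw, hw0⟩ := Matrix.exists_mulVec_eq_zero_iff.mpr h0
    apply hw
    apply hinj ξ hξ
    have : w ∈ LinearMap.ker (S ξ).mulVecLin := by simpa using hw0
    rw [hS, Matrix.ker_mulVecLin_transpose_mul_self] at this
    simpa using this
  refine ⟨fun ξ => (S ξ).det⁻¹ • ((S ξ).adjugate * (a ξ).transpose), ?_, ?_⟩
  · intro ξ hξ
    rw [Matrix.smul_mul, Matrix.mul_assoc]
    change (S ξ).det⁻¹ • ((S ξ).adjugate * S ξ) = 1
    rw [Matrix.adjugate_mul, smul_smul, inv_mul_cancel₀ (hne ξ hξ), one_smul]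
  · intro i k ξ hξ
    simp only [Matrix.smul_apply, Matrix.mul_apply, Matrix.transpose_apply, smul_eq_mul]
    refine ContDiffAt.mul ((hdet S hSs).contDiffAt.inv (hne ξ hξ)) ?_
    exact ContDiffAt.sum fun j _ => ((hadj i j).mul (ha k j)).contDiffAt

open scoped SchwartzMap FourierTransform ContDiff LineDeriv Real in
/-- The kernels `E = 𝓕⁻ χ` and `K k m = 𝓕⁻ ((2πi)⁻¹ (-ξ·∇χ) (M ξ) k m)`, with `M` the left inverse
of the symbol: `div (y E)` lies in the range of the formal adjoint of the operator, with
potentials that are again Schwartz functions. -/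
theorem exists_schwartz_kernels {n : ℕ} {κ : Type*} [Fintype κ] (c : κ → Fin n → Fin n → ℝ)
    (hinj : ∀ ξ : EuclideanSpace ℝ (Fin n), ξ ≠ 0 → ∀ w : Fin n → ℝ,
      (∀ m, ∑ i, (∑ j, ξ j * c m i j) * w i = 0) → w = 0) :
    ∃ (E : 𝓢(EuclideanSpace ℝ (Fin n), ℂ)) (K : Fin n → κ → 𝓢(EuclideanSpace ℝ (Fin n), ℂ)),
      ∫ y, E y = 1 ∧ ∀ k i y,
        (if k = i then ∑ j, fderiv ℝ (fun y : EuclideanSpace ℝ (Fin n) => (y j : ℂ) * E y) y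
          (EuclideanSpace.single j 1) else 0)
        = ∑ m, ∑ j, (c m i j : ℂ) * fderiv ℝ (K k m) y (EuclideanSpace.single j 1) := by
  obtain ⟨M, hM, hMs⟩ := exists_smooth_left_inverse
    (fun ξ : EuclideanSpace ℝ (Fin n) => Matrix.of fun m i => ∑ j, ξ j * c m i j)
    (by
      intro k i
      simp only [Matrix.of_apply]
      fun_prop)
    (by
      intro ξ hξ w hw
      refine hinj ξ hξ w fun m => ?_
      have := congrFun hw m
      simpa [Matrix.mulVec, dotProduct] using this)
  let b : ContDiffBump (0 : EuclideanSpace ℝ (Fin n)) := ⟨1, 2, one_pos, one_lt_two⟩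
  have hbs : ContDiff ℝ ∞ (fun ξ => (b ξ : ℂ)) :=
    Complex.ofRealCLM.contDiff.comp b.contDiff
  have hbc : HasCompactSupport (fun ξ => (b ξ : ℂ)) :=
    b.hasCompactSupport.comp_left (g := fun x : ℝ => (x : ℂ)) (by simp)
  let χ : 𝓢(EuclideanSpace ℝ (Fin n), ℂ) := hbc.toSchwartzMap hbs
  have hχ : ∀ ξ, χ ξ = (b ξ : ℂ) := fun ξ => rfl
  have hχ1 : ∀ ξ ∈ Metric.ball (0 : EuclideanSpace ℝ (Fin n)) 1, fderiv ℝ χ ξ = 0 := by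
    intro ξ hξ
    have : (χ : EuclideanSpace ℝ (Fin n) → ℂ) =ᶠ[nhds ξ] fun _ => 1 := by
      filter_upwards [Metric.isOpen_ball.mem_nhds hξ] with η hη
      rw [hχ, b.one_of_mem_closedBall (Metric.ball_subset_closedBall hη)]
      simp
    rw [this.fderiv_eq]
    simp
  -- the annular cut-off `-ξ·∇χ`
  let ψ : EuclideanSpace ℝ (Fin n) → ℂ := fun ξ => - fderiv ℝ χ ξ ξ
  have hψs : ContDiff ℝ ∞ ψ :=
    (ContDiff.clm_apply ((χ.smooth ⊤).fderiv_right (by simp)) contDiff_id).neg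
  -- `ψ` vanishes near the origin, the only place where `M` may fail to be smooth
  have hψ1 : ∀ ξ ∈ Metric.ball (0 : EuclideanSpace ℝ (Fin n)) 1, ψ ξ = 0 := by
    intro ξ hξ
    simp [ψ, hχ1 ξ hξ]
  have hψc : HasCompactSupport ψ := by
    have h1 : HasCompactSupport (fderiv ℝ χ) := HasCompactSupport.fderiv ℝ hbc
    refine h1.mono ?_
    intro ξ hξ
    contrapose! hξ
    simp only [Function.mem_support, not_not] at hξ ⊢
    simp [ψ, hξ]
  have hKs : ∀ k m, ContDiff ℝ ∞ (fun ξ => (2 * π * Complex.I)⁻¹ * ψ ξ * (M ξ k m : ℂ)) := by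
    intro k m
    rw [contDiff_iff_contDiffAt]
    intro ξ
    by_cases hξ : ξ = 0
    · have : (fun ξ => (2 * π * Complex.I)⁻¹ * ψ ξ * (M ξ k m : ℂ)) =ᶠ[nhds ξ] fun _ => 0 := by
        subst hξ
        filter_upwards [Metric.ball_mem_nhds _ one_pos] with η hη
        simp [hψ1 η hη]
      exact contDiffAt_const.congr_of_eventuallyEq this
    · refine (contDiff_const.mul hψs).contDiffAt.mul ?_
      exact Complex.ofRealCLM.contDiff.contDiffAt.comp ξ (hMs k m ξ hξ)
  have hKc : ∀ k m, HasCompactSupport (fun ξ => (2 * π * Complex.I)⁻¹ * ψ ξ * (M ξ k m : ℂ)) :=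
    fun k m => (hψc.mul_left).mul_right
  let Kh : Fin n → κ → 𝓢(EuclideanSpace ℝ (Fin n), ℂ) := fun k m =>
    (hKc k m).toSchwartzMap (hKs k m)
  have hpi : (2 * π * Complex.I : ℂ) ≠ 0 := by simp [Real.pi_ne_zero]
  have htg : ∀ j, Function.HasTemperateGrowth
      (fun x : EuclideanSpace ℝ (Fin n) => inner ℝ x (EuclideanSpace.single j (1 : ℝ))) := by
    intro j; fun_prop
  refine ⟨𝓕⁻ χ, fun k m => 𝓕⁻ (Kh k m), ?_, ?_⟩
  · have h := congrArg (fun f : 𝓢(EuclideanSpace ℝ (Fin n), ℂ) => f 0)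
      (FourierTransform.fourier_fourierInv_eq (E := 𝓢(EuclideanSpace ℝ (Fin n), ℂ)) (F := 𝓢(EuclideanSpace ℝ (Fin n), ℂ)) χ)
    simp only [SchwartzMap.fourier_coe, Real.fourier_eq] at h
    rw [hχ, b.one_of_mem_closedBall (by simp [b])] at h
    simpa using h
  · intro k i y
    let G : Fin n → 𝓢(EuclideanSpace ℝ (Fin n), ℂ) := fun j =>
      SchwartzMap.smulLeftCLM ℂ (inner ℝ · (EuclideanSpace.single j (1 : ℝ))) (𝓕⁻ χ)
    have hG : ∀ j, (fun y : EuclideanSpace ℝ (Fin n) => (y j : ℂ) * (𝓕⁻ χ) y) = G j := by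
      intro j
      ext y
      simp only [G]
      rw [SchwartzMap.smulLeftCLM_apply_apply (htg j)]
      simp [EuclideanSpace.inner_single_right]
    have hG2 : ∀ j, G j = 𝓕⁻ (-(2 * π * Complex.I)⁻¹ • ∂_{EuclideanSpace.single j (1:ℝ)} χ) := by
      intro j
      rw [FourierTransform.fourierInv_smul, SchwartzMap.fourierInv_lineDerivOp_eq, smul_smul]
      have h1 : -(2 * π * Complex.I : ℂ)⁻¹ * -(2 * π * Complex.I) = 1 := by
        rw [neg_mul_neg, inv_mul_cancel₀ hpi]
      rw [h1, one_smul]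
    have hL : ∀ f : 𝓢(EuclideanSpace ℝ (Fin n), ℂ), ∀ v, fderiv ℝ f y v = (∂_{v} f) y :=
      fun f v => rfl
    simp only [hG, hL]
    -- both sides are inverse Fourier transforms, so the identity is one between symbols
    have key : (if k = i then ∑ j, (∂_{EuclideanSpace.single j (1:ℝ)} (G j)) else 0)
        = ∑ m, ∑ j, (c m i j : ℂ) • ∂_{EuclideanSpace.single j (1:ℝ)} (𝓕⁻ (Kh k m)) := by
      simp only [hG2, SchwartzMap.lineDerivOp_fourierInv_eq, ← FourierTransform.fourierInv_smul]
      have hsym : (if k = i then ∑ j, ((2 * π * Complex.I : ℂ) •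
            SchwartzMap.smulLeftCLM ℂ (inner ℝ · (EuclideanSpace.single j (1:ℝ)))
              (-(2 * π * Complex.I : ℂ)⁻¹ • ∂_{EuclideanSpace.single j (1:ℝ)} χ)) else 0)
          = ∑ m, ∑ j, (c m i j : ℂ) • ((2 * π * Complex.I : ℂ) •
            SchwartzMap.smulLeftCLM ℂ (inner ℝ · (EuclideanSpace.single j (1:ℝ))) (Kh k m)) := by
        ext ξ
        have hψ : ψ ξ = - ∑ j, (ξ j : ℂ) * fderiv ℝ χ ξ (EuclideanSpace.single j (1:ℝ)) := by
          have h1 : ξ = ∑ j, ξ j • EuclideanSpace.single j (1:ℝ) := by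
            ext i; simp [Pi.single_apply]
          change -(fderiv ℝ χ ξ ξ) = _
          have h2 := congrArg (fderiv ℝ χ ξ) h1
          rw [map_sum] at h2
          rw [h2]
          simp
        have hK : ∀ m, Kh k m ξ = (2 * π * Complex.I)⁻¹ * ψ ξ * (M ξ k m : ℂ) := fun m => rfl
        have hR : (∑ m, ∑ j, (c m i j : ℂ) • ((2 * π * Complex.I : ℂ) •
            SchwartzMap.smulLeftCLM ℂ (inner ℝ · (EuclideanSpace.single j (1:ℝ))) (Kh k m))) ξ
            = ψ ξ * ((∑ m, M ξ k m * ∑ j, ξ j * c m i j : ℝ) : ℂ) := by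
          simp only [sum_apply, smul_apply, SchwartzMap.smulLeftCLM_apply_apply (htg _), hK]
          push_cast
          rw [Finset.mul_sum]
          refine Finset.sum_congr rfl fun m _ => ?_
          rw [Finset.mul_sum, Finset.mul_sum]
          refine Finset.sum_congr rfl fun j _ => ?_
          simp only [EuclideanSpace.inner_single_right, smul_eq_mul, Complex.real_smul]
          simp only [one_mul, conj_trivial]
          field_simp
        have hL' : (if k = i then ∑ j, ((2 * π * Complex.I : ℂ) •
            SchwartzMap.smulLeftCLM ℂ (inner ℝ · (EuclideanSpace.single j (1:ℝ)))
              (-(2 * π * Complex.I : ℂ)⁻¹ • ∂_{EuclideanSpace.single j (1:ℝ)} χ)) else 0) ξ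
            = if k = i then ψ ξ else 0 := by
          split_ifs
          · simp only [sum_apply, smul_apply, SchwartzMap.smulLeftCLM_apply_apply (htg _), hψ,
              SchwartzMap.lineDerivOp_apply_eq_fderiv]
            rw [← Finset.sum_neg_distrib]
            refine Finset.sum_congr rfl fun j _ => ?_
            simp only [EuclideanSpace.inner_single_right, smul_eq_mul, Complex.real_smul]
            simp only [one_mul, conj_trivial]
            field_simp
          · rfl
        rw [hL', hR]
        by_cases hξ : ξ = 0
        · simp [hξ, hψ1]
        · have := congrFun (congrFun (hM ξ hξ) k) i
          simp only [Matrix.mul_apply, Matrix.of_apply, Matrix.one_apply] at this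
          rw [this]
          split_ifs <;> simp
      simp only [← FourierTransform.fourierInv_sum]
      rw [← hsym]
      split_ifs
      · rfl
      · exact (FourierTransform.fourierInv_zero ..).symm
    have := congrArg (fun f : 𝓢(EuclideanSpace ℝ (Fin n), ℂ) => f y) key
    simp only [sum_apply, smul_apply, smul_eq_mul] at this
    rw [← this]
    split_ifs <;> simp

open scoped SchwartzMap in
/-- Real-valued version of `exists_schwartz_kernels` on `Fin n → ℝ` (real parts of the kernels,
transported from `EuclideanSpace`), recording only the decay used below. -/
theorem exists_real_kernels {n : ℕ} {κ : Type*} [Fintype κ] (c : κ → Fin n → Fin n → ℝ)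
    (hinj : ∀ ξ : Fin n → ℝ, ξ ≠ 0 → ∀ w : Fin n → ℝ,
      (∀ m, ∑ i, (∑ j, ξ j * c m i j) * w i = 0) → w = 0) :
    ∃ (E : (Fin n → ℝ) → ℝ) (K : Fin n → κ → (Fin n → ℝ) → ℝ),
      ContDiff ℝ 1 E ∧ (∀ k m, ContDiff ℝ 1 (K k m)) ∧ Integrable E ∧
      Integrable (fun y => ‖y‖ * |E y|) ∧ ∫ y, E y = 1 ∧
      (∃ C : ℝ, 0 < C ∧ ∀ k m y, |K k m y| * (1 + ‖y‖) ^ n ≤ C) ∧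
      ∀ k i y, (if k = i then ∑ j, fderiv ℝ (fun y : Fin n → ℝ => y j * E y) y
          (Pi.single j 1) else 0)
        = ∑ m, ∑ j, c m i j * fderiv ℝ (K k m) y (Pi.single j 1) := by
  obtain ⟨E, K, hE, hid⟩ := exists_schwartz_kernels c (by
    intro ξ hξ w hw
    exact hinj ξ.ofLp (by simpa using hξ) w hw)
  let e : (Fin n → ℝ) →L[ℝ] EuclideanSpace ℝ (Fin n) :=
    ((PiLp.continuousLinearEquiv 2 ℝ (fun _ : Fin n => ℝ)).symm :
      (Fin n → ℝ) →L[ℝ] EuclideanSpace ℝ (Fin n))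
  have he : ∀ y, e y = WithLp.toLp 2 y := fun y => rfl
  have hes : ∀ j, e (Pi.single j 1) = EuclideanSpace.single j 1 := fun j => rfl
  have hnorm : ∀ y, ‖y‖ ≤ ‖e y‖ := by
    intro y
    rw [pi_norm_le_iff_of_nonneg (norm_nonneg _)]
    intro i
    exact PiLp.norm_apply_le (e y) i
  have hmp : MeasurePreserving e := PiLp.volume_preserving_toLp (Fin n)
  have hme : MeasurableEmbedding e :=
    ((PiLp.continuousLinearEquiv 2 ℝ
      (fun _ : Fin n => ℝ)).symm.toHomeomorph).measurableEmbedding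
  have hSint : ∀ f : 𝓢(EuclideanSpace ℝ (Fin n), ℂ), Integrable (fun y => f (e y)) :=
    fun f => (hmp.integrable_comp_emb hme).mpr f.integrable
  have hcd : ∀ f : 𝓢(EuclideanSpace ℝ (Fin n), ℂ), ContDiff ℝ 1 (fun y => (f (e y)).re) :=
    fun f => Complex.reCLM.contDiff.comp ((f.smooth 1).comp e.contDiff)
  have hfd : ∀ f : EuclideanSpace ℝ (Fin n) → ℂ, Differentiable ℝ f → ∀ y v,
      fderiv ℝ (fun y => (f (e y)).re) y v = (fderiv ℝ f (e y) (e v)).re := by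
    intro f hf y v
    have h := Complex.reCLM.hasFDerivAt.comp y
      ((hf (e y)).hasFDerivAt.comp y e.hasFDerivAt)
    have h2 : fderiv ℝ (fun y => (f (e y)).re) y = _ := h.fderiv
    rw [h2]
    rfl
  refine ⟨fun y => (E (e y)).re, fun k m y => (K k m (e y)).re, hcd E, fun k m => hcd _,
    (hSint E).re, ?_, ?_, ?_, ?_⟩
  · have h1 : Integrable (fun y => ‖e y‖ ^ 1 * ‖E (e y)‖) :=
      (hmp.integrable_comp_emb hme (g := fun y => ‖y‖ ^ 1 * ‖E y‖)).mpr
        (E.integrable_pow_mul volume 1)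
    refine h1.mono' ?_ ?_
    · exact (continuous_norm.mul (hcd E).continuous.abs).aestronglyMeasurable
    · refine Filter.Eventually.of_forall fun y => ?_
      rw [norm_mul, norm_norm, norm_abs_eq_norm, pow_one]
      exact mul_le_mul (hnorm y) (Complex.abs_re_le_norm _) (norm_nonneg _) (norm_nonneg _)
  · have h1 : ∫ y, E (e y) = 1 := by rw [hmp.integral_comp hme, hE]
    have h2 := integral_re (hSint E)
    simp only [h1] at h2
    simpa using h2
  · have hb : ∀ k m, ∃ C : ℝ, 0 < C ∧ ∀ y, |(K k m (e y)).re| * (1 + ‖y‖) ^ n ≤ C := by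
      intro k m
      obtain ⟨C0, hC0, h0⟩ := (K k m).decay 0 0
      obtain ⟨C1, hC1, h1⟩ := (K k m).decay n 0
      refine ⟨2 ^ n * (C0 + C1), by positivity, fun y => ?_⟩
      have h0' := h0 (e y)
      have h1' := h1 (e y)
      simp only [norm_iteratedFDeriv_zero, pow_zero, one_mul] at h0' h1'
      have hp : (1 + ‖y‖) ^ n ≤ 2 ^ n * (1 + ‖e y‖ ^ n) := by
        calc (1 + ‖y‖) ^ n ≤ (2 * max 1 ‖e y‖) ^ n := by
              gcongr
              have := hnorm y
              have h3 := le_max_left 1 ‖e y‖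
              have h4 := le_max_right 1 ‖e y‖
              linarith
          _ = 2 ^ n * (max 1 ‖e y‖) ^ n := mul_pow _ _ _
          _ ≤ _ := by
              gcongr
              rcases max_choice 1 ‖e y‖ with h | h <;> rw [h]
              · simp
              · simp
      calc |(K k m (e y)).re| * (1 + ‖y‖) ^ n
          ≤ ‖K k m (e y)‖ * (2 ^ n * (1 + ‖e y‖ ^ n)) :=
            mul_le_mul (Complex.abs_re_le_norm _) hp (by positivity) (norm_nonneg _)
        _ = 2 ^ n * (‖K k m (e y)‖ + ‖e y‖ ^ n * ‖K k m (e y)‖) := by ring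
        _ ≤ _ := by gcongr
    choose C hC hCb using hb
    refine ⟨1 + ∑ k, ∑ m, C k m, ?_, fun k m y => (hCb k m y).trans ?_⟩
    · have : 0 ≤ ∑ k, ∑ m, C k m :=
        Finset.sum_nonneg fun k _ => Finset.sum_nonneg fun m _ => (hC k m).le
      linarith
    · have h1 : C k m ≤ ∑ m, C k m :=
        Finset.single_le_sum (fun m _ => (hC k m).le) (Finset.mem_univ m)
      have h2 : ∑ m, C k m ≤ ∑ k, ∑ m, C k m :=
        Finset.single_le_sum (f := fun k => ∑ m, C k m)
          (fun k _ => Finset.sum_nonneg fun m _ => (hC k m).le) (Finset.mem_univ k)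
      linarith
  · intro k i y
    have h1 := congrArg Complex.re (hid k i (e y))
    have h2 : ∀ j, fderiv ℝ (fun y : Fin n → ℝ => y j * (E (e y)).re) y (Pi.single j 1)
        = (fderiv ℝ (fun y : EuclideanSpace ℝ (Fin n) => (y j : ℂ) * E y) (e y)
          (EuclideanSpace.single j 1)).re := by
      intro j
      have hd : Differentiable ℝ (fun y : EuclideanSpace ℝ (Fin n) => (y j : ℂ) * E y) := by
        refine Differentiable.mul ?_ E.differentiable
        exact Complex.ofRealCLM.differentiable.comp (by fun_prop)
      rw [← hes, ← hfd _ hd]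
      congr 2
      ext z
      simp [he]
    have h3 : ∀ k m j, fderiv ℝ (fun y => (K k m (e y)).re) y (Pi.single j 1)
        = (fderiv ℝ (K k m) (e y) (EuclideanSpace.single j 1)).re := by
      intro k m j
      rw [hfd _ (K k m).differentiable, hes]
    simp only [h2, h3]
    split_ifs at h1 ⊢
    · simpa [Complex.re_sum] using h1
    · simpa [Complex.re_sum] using h1

/-- The kernel identity of `exists_real_kernels`, integrated by parts against a compactly
supported field `u`. -/
theorem weak_identity {n : ℕ} {κ : Type*} [Fintype κ] (c : κ → Fin n → Fin n → ℝ)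
    {E : (Fin n → ℝ) → ℝ} {K : Fin n → κ → (Fin n → ℝ) → ℝ}
    (hE : ContDiff ℝ 1 E) (hK : ∀ k m, ContDiff ℝ 1 (K k m))
    (hid : ∀ k i y, (if k = i then ∑ j, fderiv ℝ (fun y : Fin n → ℝ => y j * E y) y
          (Pi.single j 1) else 0)
        = ∑ m, ∑ j, c m i j * fderiv ℝ (K k m) y (Pi.single j 1))
    {u : (Fin n → ℝ) → (Fin n → ℝ)} (hu : ContDiff ℝ 1 u) (huc : HasCompactSupport u)
    (k : Fin n) :
    ∫ y, E y * fderiv ℝ u y y k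
      = ∫ y, ∑ m, K k m y * ∑ i, ∑ j, c m i j * fderiv ℝ u y (Pi.single j 1) i := by
  have hui : ∀ i, ContDiff ℝ 1 (fun y => u y i) := fun i => contDiff_pi.mp hu i
  have huic : ∀ i, HasCompactSupport (fun y => u y i) := fun i =>
    huc.comp_left (g := fun w : Fin n → ℝ => w i) rfl
  have hfd : ∀ i y v, fderiv ℝ u y v i = fderiv ℝ (fun y => u y i) y v := by
    intro i y v
    have h := hasFDerivAt_pi'.mp (hu.differentiable one_ne_zero y).hasFDerivAt i
    rw [h.fderiv]
    rfl
  have hdc : ∀ i v, Continuous (fun y => fderiv ℝ (fun y => u y i) y v) := fun i v =>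
    ((hui i).continuous_fderiv one_ne_zero).clm_apply continuous_const
  have hdcs : ∀ i v, HasCompactSupport (fun y => fderiv ℝ (fun y => u y i) y v) := fun i v =>
    (huic i).fderiv_apply ℝ v
  -- integration by parts against a `C¹` function
  have ibp : ∀ (g : (Fin n → ℝ) → ℝ), ContDiff ℝ 1 g → ∀ i v,
      Integrable (fun y => g y * fderiv ℝ (fun y => u y i) y v) ∧
      Integrable (fun y => fderiv ℝ g y v * u y i) ∧
      ∫ y, g y * fderiv ℝ (fun y => u y i) y v = - ∫ y, fderiv ℝ g y v * u y i := by
    intro g hg i v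
    have hgd : Continuous (fun y => fderiv ℝ g y v) :=
      (hg.continuous_fderiv one_ne_zero).clm_apply continuous_const
    have i1 : Integrable (fun y => g y * fderiv ℝ (fun y => u y i) y v) :=
      (hg.continuous.mul (hdc i v)).integrable_of_hasCompactSupport ((hdcs i v).mul_left)
    have i2 : Integrable (fun y => fderiv ℝ g y v * u y i) :=
      (hgd.mul (hui i).continuous).integrable_of_hasCompactSupport ((huic i).mul_left)
    have i3 : Integrable (fun y => g y * u y i) :=
      (hg.continuous.mul (hui i).continuous).integrable_of_hasCompactSupport ((huic i).mul_left)
    exact ⟨i1, i2, integral_mul_fderiv_eq_neg_fderiv_mul_of_integrable i2 i1 i3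
      (fun x _ => hg.differentiable one_ne_zero x)
      (fun x _ => (hui i).differentiable one_ne_zero x)⟩
  have hEj : ∀ j, ContDiff ℝ 1 (fun y : Fin n → ℝ => y j * E y) := fun j =>
    (contDiff_apply ℝ ℝ j).mul hE
  have hL : ∫ y, E y * fderiv ℝ u y y k
      = - ∫ y, (∑ j, fderiv ℝ (fun y : Fin n → ℝ => y j * E y) y (Pi.single j 1)) * u y k := by
    have h1 : ∀ y, E y * fderiv ℝ u y y k
        = ∑ j, (y j * E y) * fderiv ℝ (fun y => u y k) y (Pi.single j 1) := by
      intro y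
      have h2 : y = ∑ j, y j • (Pi.single j 1 : Fin n → ℝ) := by
        ext i; simp [Pi.single_apply]
      have h3 := congrArg (fderiv ℝ (fun y => u y k) y) h2
      rw [map_sum] at h3
      rw [hfd, h3, Finset.mul_sum]
      refine Finset.sum_congr rfl fun j _ => ?_
      rw [map_smul, smul_eq_mul]; ring
    simp only [h1, Finset.sum_mul]
    rw [integral_finsetSum _ fun j _ => (ibp _ (hEj j) k _).1,
      integral_finsetSum _ fun j _ => (ibp _ (hEj j) k _).2.1, ← Finset.sum_neg_distrib]
    exact Finset.sum_congr rfl fun j _ => (ibp _ (hEj j) k _).2.2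
  have hR : ∫ y, ∑ m, K k m y * ∑ i, ∑ j, c m i j * fderiv ℝ u y (Pi.single j 1) i
      = - ∫ y, ∑ m, ∑ i, ∑ j, c m i j * (fderiv ℝ (K k m) y (Pi.single j 1) * u y i) := by
    have h1 : ∀ y, ∑ m, K k m y * ∑ i, ∑ j, c m i j * fderiv ℝ u y (Pi.single j 1) i
        = ∑ m, ∑ i, ∑ j, c m i j *
          (K k m y * fderiv ℝ (fun y => u y i) y (Pi.single j 1)) := by
      intro y
      simp only [Finset.mul_sum, hfd]
      refine Finset.sum_congr rfl fun m _ => Finset.sum_congr rfl fun i _ =>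
        Finset.sum_congr rfl fun j _ => by ring
    simp only [h1]
    have a1 : ∀ m i j, Integrable (fun y => c m i j *
        (K k m y * fderiv ℝ (fun y => u y i) y (Pi.single j 1))) := fun m i j =>
      (ibp _ (hK k m) i _).1.const_mul _
    have a2 : ∀ m i j, Integrable (fun y => c m i j *
        (fderiv ℝ (K k m) y (Pi.single j 1) * u y i)) := fun m i j =>
      (ibp _ (hK k m) i _).2.1.const_mul _
    rw [integral_finsetSum _ fun m _ => integrable_finsetSum _ fun i _ =>
        integrable_finsetSum _ fun j _ => a1 m i j,
      integral_finsetSum _ fun m _ => integrable_finsetSum _ fun i _ =>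
        integrable_finsetSum _ fun j _ => a2 m i j, ← Finset.sum_neg_distrib]
    refine Finset.sum_congr rfl fun m _ => ?_
    rw [integral_finsetSum _ fun i _ => integrable_finsetSum _ fun j _ => a1 m i j,
      integral_finsetSum _ fun i _ => integrable_finsetSum _ fun j _ => a2 m i j,
      ← Finset.sum_neg_distrib]
    refine Finset.sum_congr rfl fun i _ => ?_
    rw [integral_finsetSum _ fun j _ => a1 m i j, integral_finsetSum _ fun j _ => a2 m i j,
      ← Finset.sum_neg_distrib]
    refine Finset.sum_congr rfl fun j _ => ?_
    rw [integral_const_mul, integral_const_mul, (ibp _ (hK k m) i _).2.2, mul_neg]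
  rw [hL, hR]
  congr 1
  refine integral_congr_ae (Filter.Eventually.of_forall fun y => ?_)
  simp only
  rw [Finset.sum_comm]
  have h1 : ∀ i, ∑ m, ∑ j, c m i j * (fderiv ℝ (K k m) y (Pi.single j 1) * u y i)
      = (if k = i then ∑ j, fderiv ℝ (fun y : Fin n → ℝ => y j * E y) y
          (Pi.single j 1) else 0) * u y i := by
    intro i
    rw [hid]
    simp only [Finset.sum_mul, mul_assoc]
  simp only [h1, ite_mul, zero_mul, Finset.sum_ite_eq, Finset.mem_univ, if_true]

/-! ### The Riesz potential bound -/

/-- The sharp constant would be `1 / (n - 1) ≤ 1`. For `r = 0` the right-hand side is `⊤`. -/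
theorem lintegral_shifted_inv_pow_le {n : ℕ} (hn : 2 ≤ n) {r : ℝ} (hr : 0 ≤ r) :
    ∫⁻ s in Set.Ioi (0 : ℝ), ENNReal.ofReal (((s + r) ^ n)⁻¹)
      ≤ ENNReal.ofReal r ^ (1 - (n : ℝ)) := by
  have hn' : (2 : ℝ) ≤ n := by exact_mod_cast hn
  rcases hr.eq_or_lt with rfl | hr
  · rw [ENNReal.ofReal_zero, ENNReal.zero_rpow_of_neg (by linarith)]
    exact le_top
  · have h1 : ∀ s ∈ Set.Ioi (0 : ℝ), ENNReal.ofReal (((s + r) ^ n)⁻¹)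
        = ENNReal.ofReal ((s + r) ^ (-(n : ℝ))) := by
      intro s hs
      rw [Real.rpow_neg (add_pos hs hr).le, Real.rpow_natCast]
    rw [setLIntegral_congr_fun measurableSet_Ioi h1]
    have hd : ∀ x ∈ Set.Ici (0 : ℝ), HasDerivAt
        (fun s => (s + r) ^ (1 - (n : ℝ)) / (1 - (n : ℝ))) ((x + r) ^ (-(n : ℝ))) x := by
      intro x hx
      have hx' : 0 < x + r := add_pos_of_nonneg_of_pos hx hr
      have := (((hasDerivAt_id x).add_const r).rpow_const (p := 1 - (n : ℝ))
        (Or.inl hx'.ne')).div_const (1 - (n : ℝ))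
      refine this.congr_deriv ?_
      have h0 : 1 - (n : ℝ) ≠ 0 := by linarith
      rw [show (1 - (n : ℝ) - 1) = -(n : ℝ) by ring, one_mul, mul_div_assoc, mul_comm,
        div_mul_cancel₀ _ h0]
      rfl
    have hnn : ∀ x ∈ Set.Ioi (0 : ℝ), 0 ≤ (x + r) ^ (-(n : ℝ)) := fun x hx =>
      Real.rpow_nonneg (add_pos hx hr).le _
    have ht : Filter.Tendsto (fun s : ℝ => (s + r) ^ (1 - (n : ℝ)) / (1 - (n : ℝ)))
        Filter.atTop (nhds 0) := by
      have h2 : Filter.Tendsto (fun s : ℝ => (s + r) ^ (-((n : ℝ) - 1))) Filter.atTop (nhds 0) :=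
        (tendsto_rpow_neg_atTop (by linarith)).comp
          (Filter.tendsto_atTop_add_const_right _ _ Filter.tendsto_id)
      simpa using h2.div_const (1 - (n : ℝ))
    have hint := integrableOn_Ioi_deriv_of_nonneg' hd hnn ht
    have hval := integral_Ioi_of_hasDerivAt_of_nonneg' hd hnn ht
    rw [← ofReal_integral_eq_lintegral_ofReal hint
      ((ae_restrict_iff' measurableSet_Ioi).mpr (Filter.Eventually.of_forall hnn)), hval,
      ENNReal.ofReal_rpow_of_pos hr]
    apply ENNReal.ofReal_le_ofReal
    have h3 : 0 ≤ r ^ (1 - (n : ℝ)) := Real.rpow_nonneg hr.le _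
    rw [zero_add, zero_sub, ← div_neg]
    exact div_le_self h3 (by linarith)

/-- Pointwise domination of `v` by the Riesz potential of order one of `|𝔸v|`, obtained by
integrating the derivative of `s ↦ ∫ E(y) v_k(x - s y) dy` over `(0, ∞)`. -/
theorem pointwise_bound {n : ℕ} (hn : 2 ≤ n) {κ : Type*} [Fintype κ] (c : κ → Fin n → Fin n → ℝ)
    {E : (Fin n → ℝ) → ℝ} {K : κ → (Fin n → ℝ) → ℝ} {k : Fin n}
    (hE : Continuous E) (hEi : Integrable E)
    (hEy : Integrable (fun y => ‖y‖ * |E y|)) (hE1 : ∫ y, E y = 1)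
    {C : ℝ} (hC0 : 0 < C) (hC : ∀ m y, |K m y| * (1 + ‖y‖) ^ n ≤ C)
    (hweak : ∀ u : (Fin n → ℝ) → (Fin n → ℝ), ContDiff ℝ 1 u → HasCompactSupport u →
      ∫ y, E y * fderiv ℝ u y y k
        = ∫ y, ∑ m, K m y * ∑ i, ∑ j, c m i j * fderiv ℝ u y (Pi.single j 1) i)
    {v : (Fin n → ℝ) → (Fin n → ℝ)} (hv : ContDiff ℝ 1 v) (hvc : HasCompactSupport v)
    (x : Fin n → ℝ) :
    ‖v x k‖ₑ ≤ ENNReal.ofReal C * ∫⁻ z, ‖x - z‖ₑ ^ (1 - (n : ℝ)) *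
      ENNReal.ofReal (∑ m, |∑ i, ∑ j, c m i j * fderiv ℝ v z (Pi.single j 1) i|) := by
  have : Nonempty (Fin n) := ⟨⟨0, by omega⟩⟩
  set g : κ → (Fin n → ℝ) → ℝ := fun m z =>
    ∑ i, ∑ j, c m i j * fderiv ℝ v z (Pi.single j 1) i with hg
  set F : (Fin n → ℝ) → ℝ := fun z => ∑ m, |g m z| with hF
  have hDv : Continuous (fderiv ℝ v) := hv.continuous_fderiv one_ne_zero
  have hDvc : HasCompactSupport (fderiv ℝ v) := hvc.fderiv ℝ
  have hgc : ∀ m, Continuous (g m) := by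
    intro m
    refine continuous_finsetSum _ fun i _ => continuous_finsetSum _ fun j _ => ?_
    exact continuous_const.mul ((continuous_apply i).comp (hDv.clm_apply continuous_const))
  have hFc : Continuous F := continuous_finsetSum _ fun m _ => (hgc m).abs
  have hFcs : HasCompactSupport F := by
    refine hDvc.comp_left (g := fun L : (Fin n → ℝ) →L[ℝ] (Fin n → ℝ) =>
      ∑ m, |∑ i, ∑ j, c m i j * L (Pi.single j 1) i|) (by simp)
  have hF0 : ∀ z, 0 ≤ F z := fun z => Finset.sum_nonneg fun m _ => abs_nonneg _
  obtain ⟨B, hB⟩ := hvc.exists_bound_of_continuous hv.continuous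
  obtain ⟨B', hB'⟩ := hDvc.exists_bound_of_continuous hDv
  set w : ℝ → ℝ := fun s => ∫ y, E y * v (x - s • y) k with hw
  set w' : ℝ → ℝ := fun s => ∫ y, E y * (-(fderiv ℝ v (x - s • y) y k)) with hw'
  have hcont1 : ∀ s : ℝ, Continuous (fun y : Fin n → ℝ => E y * v (x - s • y) k) := by
    intro s
    have h0 : Continuous (fun y : Fin n → ℝ => x - s • y) := by fun_prop
    exact hE.mul ((continuous_apply k).comp (hv.continuous.comp h0))
  have hcont2 : ∀ s : ℝ, Continuous (fun y : Fin n → ℝ => E y * (-(fderiv ℝ v (x - s • y) y k))) := by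
    intro s
    have h0 : Continuous (fun y : Fin n → ℝ => x - s • y) := by fun_prop
    have h1 : Continuous (fun y : Fin n → ℝ => fderiv ℝ v (x - s • y) y) :=
      (hDv.comp h0).clm_apply continuous_id
    have h2 : Continuous (fun y : Fin n → ℝ => fderiv ℝ v (x - s • y) y k) := (continuous_apply k).comp h1
    exact hE.mul h2.neg
  have hb1 : ∀ (s : ℝ) (y : Fin n → ℝ), ‖E y * v (x - s • y) k‖ ≤ ‖E y‖ * B := by
    intro s y
    rw [norm_mul]
    gcongr
    exact (norm_le_pi_norm _ k).trans (hB _)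
  have hb2 : ∀ (s : ℝ) (y : Fin n → ℝ), ‖E y * (-(fderiv ℝ v (x - s • y) y k))‖ ≤ ‖y‖ * |E y| * B' := by
    intro s y
    rw [norm_mul, norm_neg, Real.norm_eq_abs (E y)]
    calc |E y| * ‖fderiv ℝ v (x - s • y) y k‖ ≤ |E y| * (B' * ‖y‖) := by
          gcongr
          refine (norm_le_pi_norm _ k).trans ((ContinuousLinearMap.le_opNorm _ _).trans ?_)
          gcongr
          exact hB' _
      _ = _ := by ring
  have hder : ∀ s, HasDerivAt w (w' s) s := by
    intro s
    refine (hasDerivAt_integral_of_dominated_loc_of_deriv_le (s := Set.univ) Filter.univ_mem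
      (Filter.Eventually.of_forall fun s => (hcont1 s).aestronglyMeasurable)
      ((hEi.norm.mul_const B).mono' (hcont1 s).aestronglyMeasurable
        (Filter.Eventually.of_forall (hb1 s)))
      (hcont2 s).aestronglyMeasurable
      (Filter.Eventually.of_forall fun y t _ => hb2 t y) (hEy.mul_const B')
      (Filter.Eventually.of_forall fun y t _ => ?_)).2
    refine HasDerivAt.const_mul _ ?_
    have h1 : HasDerivAt (fun t : ℝ => x - t • y) (-y) t := by
      simpa using ((hasDerivAt_id t).smul_const y).const_sub x
    have h2 := ((hv.differentiable one_ne_zero (x - t • y)).hasFDerivAt).comp_hasDerivAt t h1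
    have h3 := hasDerivAt_pi.mp h2 k
    simpa using h3
  have hw'c : Continuous w' := by
    refine continuous_of_dominated (fun s => (hcont2 s).aestronglyMeasurable)
      (fun s => Filter.Eventually.of_forall (hb2 s)) (hEy.mul_const B')
      (Filter.Eventually.of_forall fun y => ?_)
    have h0 : Continuous (fun s : ℝ => x - s • y) := by fun_prop
    have h1 : Continuous (fun s : ℝ => fderiv ℝ v (x - s • y) y) :=
      (hDv.comp h0).clm_apply continuous_const
    have h2 : Continuous (fun s : ℝ => fderiv ℝ v (x - s • y) y k) := (continuous_apply k).comp h1
    exact continuous_const.mul h2.neg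
  have hw0 : w 0 = v x k := by
    simp only [hw, zero_smul, sub_zero]
    rw [integral_mul_const, hE1, one_mul]
  have hwT : Filter.Tendsto w Filter.atTop (nhds 0) := by
    have : (0 : ℝ) = ∫ _ : Fin n → ℝ, (0 : ℝ) := by simp
    rw [this]
    refine tendsto_integral_filter_of_dominated_convergence (fun y => ‖E y‖ * B)
      (Filter.Eventually.of_forall fun s => (hcont1 s).aestronglyMeasurable)
      (Filter.Eventually.of_forall fun s => Filter.Eventually.of_forall (hb1 s))
      (hEi.norm.mul_const B) ?_
    -- off `y = 0` the point `x - s y` leaves the support of `v` for large `s`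
    have hne : ∀ᵐ y : Fin n → ℝ, y ≠ 0 := by
      simp [ae_iff, measure_singleton]
    filter_upwards [hne] with y hy
    obtain ⟨R, hR⟩ := hvc.isCompact.isBounded.subset_closedBall 0
    have hy' : 0 < ‖y‖ := norm_pos_iff.mpr hy
    refine tendsto_const_nhds.congr' ?_
    filter_upwards [Filter.eventually_gt_atTop ((‖x‖ + R) / ‖y‖), Filter.eventually_ge_atTop 0]
      with T hT hT0
    have h0 : v (x - T • y) = 0 := by
      by_contra h
      have h1 : x - T • y ∈ tsupport v := subset_tsupport _ h
      have h2 := mem_closedBall_zero_iff.mp (hR h1)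
      have h3 : ‖T • y‖ ≤ ‖x‖ + ‖x - T • y‖ := by
        have := norm_sub_le x (x - T • y)
        simpa using this
      rw [norm_smul, Real.norm_of_nonneg hT0] at h3
      rw [div_lt_iff₀ hy'] at hT
      linarith
    simp [h0]
  -- the weak identity for `u(y) = v(x - s y)` turns `s w'(s)` into an integral of `𝔸v`; the
  -- factors `s` cancel, and the change of variables `z = s y` produces the kernel `(s + |z|)^(-n)`
  have hw'b : ∀ s : ℝ, 0 < s → ‖w' s‖ ≤ ∫ z, C * ((s + ‖z‖) ^ n)⁻¹ * F (x - z) := by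
    intro s hs
    set u : (Fin n → ℝ) → (Fin n → ℝ) := fun y => v (x - s • y) with hu
    have hus : ContDiff ℝ 1 u := hv.comp (contDiff_const.sub (contDiff_id.const_smul s))
    have huc : HasCompactSupport u := by
      have : Topology.IsClosedEmbedding (fun y : Fin n → ℝ => x - s • y) :=
        ((Homeomorph.smulOfNeZero s hs.ne').trans (Homeomorph.subLeft x)).isClosedEmbedding
      exact hvc.comp_isClosedEmbedding this
    have hfu : ∀ y h, fderiv ℝ u y h = -(s • fderiv ℝ v (x - s • y) h) := by
      intro y h
      have h1 : HasFDerivAt (fun y : Fin n → ℝ => x - s • y)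
          (-(s • ContinuousLinearMap.id ℝ (Fin n → ℝ))) y :=
        ((hasFDerivAt_id y).const_smul s).const_sub x
      have h2 := ((hv.differentiable one_ne_zero (x - s • y)).hasFDerivAt).comp y h1
      have h3 : fderiv ℝ u y = _ := h2.fderiv
      rw [h3]
      simp
    have hk := hweak u hus huc
    have e1 : ∫ y, E y * fderiv ℝ u y y k = s * w' s := by
      rw [hw', ← integral_const_mul]
      refine integral_congr_ae (Filter.Eventually.of_forall fun y => ?_)
      simp only [hfu, Pi.neg_apply, Pi.smul_apply, smul_eq_mul]
      ring
    have e2 : ∫ y, ∑ m, K m y * ∑ i, ∑ j, c m i j * fderiv ℝ u y (Pi.single j 1) i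
        = s * -∫ y, ∑ m, K m y * g m (x - s • y) := by
      rw [← integral_neg, ← integral_const_mul]
      refine integral_congr_ae (Filter.Eventually.of_forall fun y => ?_)
      simp only [hfu, Pi.neg_apply, Pi.smul_apply, smul_eq_mul, hg]
      rw [← Finset.sum_neg_distrib, Finset.mul_sum]
      refine Finset.sum_congr rfl fun m _ => ?_
      simp only [mul_neg, Finset.sum_neg_distrib, Finset.mul_sum]
      congr 1
      refine Finset.sum_congr rfl fun i _ => Finset.sum_congr rfl fun j _ => by ring
    rw [e1, e2] at hk
    rw [mul_left_cancel₀ hs.ne' hk, norm_neg]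
    have e3 : ∀ y : Fin n → ℝ, C * ((1 + ‖y‖) ^ n)⁻¹ * F (x - s • y)
        = s ^ n * (fun z => C * ((s + ‖z‖) ^ n)⁻¹ * F (x - z)) (s • y) := by
      intro y
      simp only [norm_smul, Real.norm_of_nonneg hs.le]
      rw [show s + s * ‖y‖ = s * (1 + ‖y‖) by ring, mul_pow, mul_inv]
      have : s ^ n ≠ 0 := by positivity
      field_simp
    have hFx : Continuous (fun y : Fin n → ℝ => F (x - s • y)) := by
      have h0 : Continuous (fun y : Fin n → ℝ => x - s • y) := by fun_prop
      exact hFc.comp h0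
    have hint : Integrable (fun y : Fin n → ℝ => C * ((1 + ‖y‖) ^ n)⁻¹ * F (x - s • y)) := by
      refine Continuous.integrable_of_hasCompactSupport ?_ ?_
      · refine (continuous_const.mul (Continuous.inv₀ (by fun_prop) fun y => ?_)).mul hFx
        positivity
      · refine HasCompactSupport.mul_left ?_
        exact hFcs.comp_isClosedEmbedding
          ((Homeomorph.smulOfNeZero s hs.ne').trans (Homeomorph.subLeft x)).isClosedEmbedding
    calc ‖∫ y, ∑ m, K m y * g m (x - s • y)‖
        ≤ ∫ y, C * ((1 + ‖y‖) ^ n)⁻¹ * F (x - s • y) := by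
          refine norm_integral_le_of_norm_le hint (Filter.Eventually.of_forall fun y => ?_)
          refine (norm_sum_le _ _).trans ?_
          rw [hF, Finset.mul_sum]
          refine Finset.sum_le_sum fun m _ => ?_
          rw [norm_mul, Real.norm_eq_abs, Real.norm_eq_abs]
          gcongr
          rw [← div_eq_mul_inv, le_div_iff₀ (by positivity)]
          exact hC m y
      _ = ∫ z, C * ((s + ‖z‖) ^ n)⁻¹ * F (x - z) := by
          rw [integral_congr_ae (Filter.Eventually.of_forall e3), integral_const_mul,
            Measure.integral_comp_smul volume (fun z => C * ((s + ‖z‖) ^ n)⁻¹ * F (x - z)) s]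
          simp only [Module.finrank_fintype_fun_eq_card, Fintype.card_fin, smul_eq_mul]
          rw [abs_of_pos (by positivity), ← mul_assoc, mul_inv_cancel₀ (by positivity), one_mul]
  have hw'e : ∀ s : ℝ, 0 < s → ‖w' s‖ₑ ≤
      ∫⁻ z, ENNReal.ofReal (((s + ‖z‖) ^ n)⁻¹) * (ENNReal.ofReal C * ENNReal.ofReal (F (x - z))) := by
    intro s hs
    have hint : Integrable (fun z : Fin n → ℝ => C * ((s + ‖z‖) ^ n)⁻¹ * F (x - z)) := by
      refine Continuous.integrable_of_hasCompactSupport ?_ ?_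
      · refine (continuous_const.mul (Continuous.inv₀ (by fun_prop) fun y => ?_)).mul
          (hFc.comp (by fun_prop))
        positivity
      · exact HasCompactSupport.mul_left
          (hFcs.comp_isClosedEmbedding (Homeomorph.subLeft x).isClosedEmbedding)
    rw [← ofReal_norm]
    refine (ENNReal.ofReal_le_ofReal (hw'b s hs)).trans ?_
    rw [ofReal_integral_eq_lintegral_ofReal hint (Filter.Eventually.of_forall fun z => by
      have := hF0 (x - z); simp only [Pi.zero_apply]; positivity)]
    refine lintegral_mono fun z => ?_
    have := hF0 (x - z)
    rw [← ENNReal.ofReal_mul hC0.le, ← ENNReal.ofReal_mul (by positivity)]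
    exact ENNReal.ofReal_le_ofReal (by ring_nf; exact le_refl _)
  set A := ENNReal.ofReal C * ∫⁻ z, ‖x - z‖ₑ ^ (1 - (n : ℝ)) * ENNReal.ofReal (F z) with hA
  have hmain : ∀ T : ℝ, 0 ≤ T → ‖w T - w 0‖ₑ ≤ A := by
    intro T hT
    rw [← intervalIntegral.integral_eq_sub_of_hasDerivAt (fun s _ => hder s)
      (hw'c.intervalIntegrable _ _), intervalIntegral.integral_of_le hT]
    refine (enorm_integral_le_lintegral_enorm _).trans ?_
    calc ∫⁻ s in Set.Ioc 0 T, ‖w' s‖ₑ ≤ ∫⁻ s in Set.Ioi 0, ‖w' s‖ₑ :=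
          lintegral_mono_set Set.Ioc_subset_Ioi_self
      _ ≤ ∫⁻ s in Set.Ioi (0 : ℝ), ∫⁻ z, ENNReal.ofReal (((s + ‖z‖) ^ n)⁻¹) *
            (ENNReal.ofReal C * ENNReal.ofReal (F (x - z))) :=
          setLIntegral_mono' measurableSet_Ioi fun s hs => hw'e s hs
      _ = ∫⁻ z, ∫⁻ s in Set.Ioi (0 : ℝ), ENNReal.ofReal (((s + ‖z‖) ^ n)⁻¹) *
            (ENNReal.ofReal C * ENNReal.ofReal (F (x - z))) := by
          refine lintegral_lintegral_swap (Measurable.aemeasurable ?_)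
          have hFm : Measurable F := hFc.measurable
          simp only [Function.uncurry_def]
          fun_prop
      _ ≤ ∫⁻ z, ‖z‖ₑ ^ (1 - (n : ℝ)) * (ENNReal.ofReal C * ENNReal.ofReal (F (x - z))) := by
          refine lintegral_mono fun z => ?_
          rw [lintegral_mul_const' _ _ (by finiteness)]
          gcongr
          rw [← ofReal_norm]
          exact lintegral_shifted_inv_pow_le hn (norm_nonneg z)
      _ = A := by
          rw [hA, ← lintegral_const_mul' _ _ (by finiteness),
            ← lintegral_sub_left_eq_self _ x]
          refine lintegral_congr fun z => ?_
          rw [sub_sub_cancel]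
          ring
  have hlim : Filter.Tendsto (fun T => ‖w T - w 0‖ₑ) Filter.atTop (nhds ‖v x k‖ₑ) := by
    have h := (hwT.sub_const (w 0)).enorm
    rw [zero_sub, enorm_neg, hw0] at h
    rw [hw0]
    exact h
  refine le_of_tendsto hlim ?_
  filter_upwards [Filter.eventually_ge_atTop 0] with T hT
  have := hmain T hT
  rwa [hw0] at this ⊢

/-! ### Integrating the potential -/

theorem lintegral_ball_rpow_lt_top {n : ℕ} (hn : 2 ≤ n) {a : ℝ} (ha : a < n) {ρ : ℝ}
    (hρ : 0 < ρ) :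
    ∫⁻ z in Metric.ball (0 : Fin n → ℝ) ρ, ‖z‖ₑ ^ (-a) < ⊤ := by
  have : Nonempty (Fin n) := ⟨⟨0, by omega⟩⟩
  have h : IntegrableOn (fun z : Fin n → ℝ => ‖z‖ ^ (-a)) (Metric.ball 0 ρ) := by
    rw [integrableOn_fun_norm_addHaar volume (f := fun r : ℝ => r ^ (-a))]
    have h1 : IntegrableOn (fun r : ℝ => r ^ ((n : ℝ) - 1 - a)) (Set.Ioo 0 ρ) :=
      (intervalIntegral.integrableOn_Ioo_rpow_iff hρ).mpr (by linarith)
    refine h1.congr_fun (fun r hr => ?_) measurableSet_Ioo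
    simp only [Module.finrank_fintype_fun_eq_card, Fintype.card_fin, smul_eq_mul]
    rw [← Real.rpow_natCast, ← Real.rpow_add hr.1, Nat.cast_sub (by omega)]
    congr 1
    rw [Nat.cast_one]
    ring
  refine lt_of_eq_of_lt (setLIntegral_congr_fun_ae measurableSet_ball ?_) h.hasFiniteIntegral
  have hne : ∀ᵐ y : Fin n → ℝ, y ≠ 0 := by
    simp [ae_iff, measure_singleton]
  filter_upwards [hne] with z hz _
  rw [← ofReal_norm, ENNReal.ofReal_rpow_of_pos (norm_pos_iff.mpr hz), ← ofReal_norm,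
    Real.norm_of_nonneg (by positivity)]

/-- Jensen's inequality for the power `p` and the (unnormalised) measure `F dμ`. -/
theorem lintegral_mul_rpow_le {X : Type*} [MeasurableSpace X] (μ : Measure X) {p : ℝ}
    (hp : 1 ≤ p) {R F : X → ENNReal} (hR : Measurable R) (hF : Measurable F) :
    (∫⁻ z, R z * F z ∂μ) ^ p ≤ (∫⁻ z, R z ^ p * F z ∂μ) * (∫⁻ z, F z ∂μ) ^ (p - 1) := by
  have hp0 : 0 < p := by linarith
  have h := eLpNorm'_le_eLpNorm'_mul_rpow_measure_univ (μ := μ.withDensity F) one_pos hp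
    hR.aestronglyMeasurable
  have h' := ENNReal.rpow_le_rpow h hp0.le
  simp only [eLpNorm', enorm_eq_self, ENNReal.rpow_one, div_one] at h'
  rw [lintegral_withDensity_eq_lintegral_mul _ hF hR,
    lintegral_withDensity_eq_lintegral_mul _ hF (hR.pow_const p),
    withDensity_apply _ MeasurableSet.univ, Measure.restrict_univ,
    ENNReal.mul_rpow_of_nonneg _ _ hp0.le, ← ENNReal.rpow_mul, ← ENNReal.rpow_mul,
    one_div_mul_cancel hp0.ne', ENNReal.rpow_one] at h'
  rw [show (1 - 1 / p) * p = p - 1 by field_simp] at h'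
  simpa only [Pi.mul_apply, mul_comm (F _)] using h'

/-- An integral operator whose kernel sections `R · z` have `p`-th power integrals at most `M` is
bounded from `L¹` to `L^p`; the bound on the sections is needed only where `F` lives. -/
theorem lintegral_riesz_rpow_le {X : Type*} [MeasurableSpace X] (μ ν : Measure X)
    [SFinite μ] [SFinite ν] {p : ℝ} (hp : 1 ≤ p) {R : X → X → ENNReal} {F : X → ENNReal}
    (hR : Measurable (Function.uncurry R)) (hF : Measurable F) {M : ENNReal}
    (hM : ∀ z, F z ≠ 0 → ∫⁻ x, R x z ^ p ∂μ ≤ M) :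
    ∫⁻ x, (∫⁻ z, R x z * F z ∂ν) ^ p ∂μ ≤ M * (∫⁻ z, F z ∂ν) ^ p := by
  have hRx : ∀ x, Measurable (R x) := fun x => hR.comp measurable_prodMk_left
  have hRz : ∀ z, Measurable (fun x => R x z) := fun z => hR.comp measurable_prodMk_right
  calc ∫⁻ x, (∫⁻ z, R x z * F z ∂ν) ^ p ∂μ
      ≤ ∫⁻ x, (∫⁻ z, R x z ^ p * F z ∂ν) * (∫⁻ z, F z ∂ν) ^ (p - 1) ∂μ :=
        lintegral_mono fun x => lintegral_mul_rpow_le ν hp (hRx x) hF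
    _ = (∫⁻ x, ∫⁻ z, R x z ^ p * F z ∂ν ∂μ) * (∫⁻ z, F z ∂ν) ^ (p - 1) := by
        rw [lintegral_mul_const]
        exact Measurable.lintegral_prod_right' (f := fun q : X × X => R q.1 q.2 ^ p * F q.2)
          ((hR.pow_const p).mul (hF.comp measurable_snd))
    _ = (∫⁻ z, ∫⁻ x, R x z ^ p * F z ∂μ ∂ν) * (∫⁻ z, F z ∂ν) ^ (p - 1) := by
        rw [lintegral_lintegral_swap]
        exact ((hR.pow_const p).mul (hF.comp measurable_snd)).aemeasurable
    _ ≤ (∫⁻ z, M * F z ∂ν) * (∫⁻ z, F z ∂ν) ^ (p - 1) := by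
        gcongr with z
        rw [lintegral_mul_const _ ((hRz z).pow_const p)]
        by_cases hz : F z = 0
        · simp [hz]
        · gcongr
          exact hM z hz
    _ = M * (∫⁻ z, F z ∂ν) ^ p := by
        rw [lintegral_const_mul _ hF, mul_assoc]
        congr 1
        nth_rewrite 1 [← ENNReal.rpow_one (∫⁻ z, F z ∂ν)]
        rw [← ENNReal.rpow_add_of_nonneg _ _ zero_le_one (by linarith)]
        congr 1
        ring

/-! ### The operator `𝔸` and the main estimate -/

theorem abs_le_frobNorm {n : ℕ} (M : Fin n → Fin n → ℝ) (l m : Fin n) :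
    |M l m| ≤ frobNorm M := by
  refine Real.abs_le_sqrt ?_
  exact (Finset.single_le_sum (f := fun j => M l j ^ 2) (fun j _ => sq_nonneg _)
    (Finset.mem_univ m)).trans (Finset.single_le_sum (f := fun i => ∑ j, M i j ^ 2)
      (fun i _ => Finset.sum_nonneg fun j _ => sq_nonneg _) (Finset.mem_univ l))

theorem vecNorm_le_sum {n : ℕ} (v : Fin n → ℝ) : vecNorm v ≤ ∑ k, |v k| := by
  refine Real.sqrt_le_iff.mpr ⟨Finset.sum_nonneg fun _ _ => abs_nonneg _, ?_⟩
  simpa only [sq_abs] using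
    Finset.sum_sq_le_sq_sum_of_nonneg (s := Finset.univ) (f := fun k => |v k|)
      (fun k _ => abs_nonneg _)

theorem continuous_vecNorm {n : ℕ} : Continuous (vecNorm (n := n)) := by
  unfold vecNorm
  fun_prop

theorem continuous_frobNorm {n : ℕ} : Continuous (frobNorm (n := n)) := by
  unfold frobNorm
  fun_prop

theorem linearMap_apply_eq_sum {n : ℕ} (L : (Fin n → ℝ) →ₗ[ℝ] (Fin n → Fin n → ℝ))
    (w : Fin n → ℝ) (l m : Fin n) : L w l m = ∑ i, w i * L (Pi.single i 1) l m := by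
  conv_lhs => rw [pi_eq_sum_univ' w]
  simp [map_sum, Finset.sum_apply]

theorem Aop_apply_eq_sum {n : ℕ} (A : Fin n → ((Fin n → ℝ) →ₗ[ℝ] (Fin n → Fin n → ℝ)))
    (v : (Fin n → ℝ) → (Fin n → ℝ)) (z : Fin n → ℝ) (l m : Fin n) :
    Aop n A v z l m
      = ∑ i, ∑ j, A j (Pi.single i 1) l m * fderiv ℝ v z (Pi.single j 1) i := by
  rw [Finset.sum_comm]
  simp only [Aop, Finset.sum_apply]
  refine Finset.sum_congr rfl fun j _ => ?_
  rw [linearMap_apply_eq_sum]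
  exact Finset.sum_congr rfl fun i _ => mul_comm _ _

/-- The Riesz potential bound for `𝔸`, in terms of the Euclidean and Frobenius norms and with a
constant depending only on `𝔸`. -/
theorem exists_riesz_bound {n : ℕ} (hn : 2 ≤ n)
    (A : Fin n → ((Fin n → ℝ) →ₗ[ℝ] (Fin n → Fin n → ℝ)))
    (hRell : ∀ z : Fin n → ℝ, z ≠ 0 →
      Function.Injective (fun v : Fin n → ℝ => ∑ j, z j • A j v)) :
    ∃ D : ENNReal, D ≠ ⊤ ∧ ∀ v : (Fin n → ℝ) → (Fin n → ℝ),
      ContDiff ℝ 1 v → HasCompactSupport v → ∀ x,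
        ENNReal.ofReal (vecNorm (v x)) ≤
          D * ∫⁻ z, ‖x - z‖ₑ ^ (1 - (n : ℝ)) * ENNReal.ofReal (frobNorm (Aop n A v z)) := by
  let c : Fin n × Fin n → Fin n → Fin n → ℝ := fun m i j => A j (Pi.single i 1) m.1 m.2
  obtain ⟨E, K, hE, hK, hEi, hEy, hE1, ⟨C, hC0, hC⟩, hid⟩ := exists_real_kernels c (by
    intro ξ hξ w hw
    refine hRell ξ hξ ?_
    simp only [map_zero, smul_zero, Finset.sum_const_zero]
    funext l m
    have h := hw (l, m)
    simp only [Finset.sum_apply, Pi.smul_apply, smul_eq_mul, Pi.zero_apply]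
    rw [← h]
    simp only [linearMap_apply_eq_sum _ w, Finset.mul_sum, Finset.sum_mul]
    rw [Finset.sum_comm]
    exact Finset.sum_congr rfl fun i _ => Finset.sum_congr rfl fun j _ => by simp only [c]; ring)
  refine ⟨n * (ENNReal.ofReal C * (n * n)), by finiteness, fun v hv hvc x => ?_⟩
  set I := ∫⁻ z, ‖x - z‖ₑ ^ (1 - (n : ℝ)) * ENNReal.ofReal (frobNorm (Aop n A v z)) with hI
  have hF : ∀ z, ∑ m, |∑ i, ∑ j, c m i j * fderiv ℝ v z (Pi.single j 1) i|
      ≤ (n * n) * frobNorm (Aop n A v z) := by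
    intro z
    refine (Finset.sum_le_card_nsmul _ _ (frobNorm (Aop n A v z)) fun m _ => ?_).trans
      (le_of_eq ?_)
    · simp only [c]
      rw [← Aop_apply_eq_sum]
      exact abs_le_frobNorm _ _ _
    · simp
  have hk : ∀ k, ‖v x k‖ₑ ≤ ENNReal.ofReal C * (n * n) * I := by
    intro k
    refine (pointwise_bound hn c hE.continuous hEi hEy hE1 hC0 (hC k)
      (fun u hu huc => weak_identity c hE hK hid hu huc k) hv hvc x).trans ?_
    rw [mul_assoc, hI, ← lintegral_const_mul' ((n : ENNReal) * n) _ (by finiteness)]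
    refine mul_le_mul_right (lintegral_mono fun z => ?_) _
    simp only
    rw [mul_left_comm ((n : ENNReal) * n)]
    gcongr
    refine (ENNReal.ofReal_le_ofReal (hF z)).trans (le_of_eq ?_)
    rw [ENNReal.ofReal_mul (by positivity), ENNReal.ofReal_mul (by positivity),
      ENNReal.ofReal_natCast]
  calc ENNReal.ofReal (vecNorm (v x)) ≤ ENNReal.ofReal (∑ k, |v x k|) :=
        ENNReal.ofReal_le_ofReal (vecNorm_le_sum _)
    _ = ∑ k, ‖v x k‖ₑ := by
        rw [ENNReal.ofReal_sum_of_nonneg fun _ _ => abs_nonneg _]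
        exact Finset.sum_congr rfl fun k _ => (Real.enorm_eq_ofReal_abs _).symm
    _ ≤ ∑ _k : Fin n, ENNReal.ofReal C * (n * n) * I := Finset.sum_le_sum fun k _ => hk k
    _ = _ := by simp [mul_assoc]

/-- if `U ⊂ ℝⁿ` is open, bounded and star-shaped with respect to a ball and
`𝔸` is ℝ-elliptic, then for every `p ∈ [1, n/(n−1))` there is `C_p > 0` with
`‖v‖_{L^p(U)} ≤ C_p ‖𝔸v‖_{L¹(U)}` for all `v ∈ C¹_c(U; ℝⁿ)`. -/
theorem statement8 (n : ℕ) (hn : 2 ≤ n) (U : Set (Fin n → ℝ))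
    (hUo : IsOpen U) (hUb : Bornology.IsBounded U) (hstar : StarShapedWrtBall n U)
    (A : Fin n → ((Fin n → ℝ) →ₗ[ℝ] (Fin n → Fin n → ℝ)))
    (hsymA : ∀ j w k l, A j w k l = A j w l k)
    (hcross : ∀ i j, A j (Pi.single i 1) = A i (Pi.single j 1))
    (hRell : ∀ z : Fin n → ℝ, z ≠ 0 →
      Function.Injective (fun v : Fin n → ℝ => ∑ j, z j • A j v)) :
    ∀ p : ℝ, 1 ≤ p → p < (n : ℝ) / ((n : ℝ) - 1) →
      ∃ C : ℝ, 0 < C ∧ ∀ v : (Fin n → ℝ) → (Fin n → ℝ),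
        ContDiff ℝ 1 v → HasCompactSupport v → tsupport v ⊆ U →
        (∫ x in U, vecNorm (v x) ^ p) ^ (1 / p)
          ≤ C * ∫ x in U, frobNorm (Aop n A v x) := by
  intro p hp hpn
  have hp0 : 0 < p := by linarith
  have hn' : (2 : ℝ) ≤ n := by exact_mod_cast hn
  have ha : ((n : ℝ) - 1) * p < n := by
    rw [lt_div_iff₀ (by linarith)] at hpn
    linarith
  obtain ⟨D, hD, hDv⟩ := exists_riesz_bound hn A hRell
  obtain ⟨r, hr⟩ := hUb.subset_ball 0
  set ρ : ℝ := 2 * max r 1 with hρ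
  have hρ0 : 0 < ρ := by positivity
  set M : ENNReal := ∫⁻ z in Metric.ball (0 : Fin n → ℝ) ρ, ‖z‖ₑ ^ (-(((n : ℝ) - 1) * p)) with hM
  have hMt : M < ⊤ := lintegral_ball_rpow_lt_top hn ha hρ0
  -- the kernel is `p`-integrable over `U`, uniformly in the pole `z ∈ U`
  have hMz : ∀ z ∈ U, ∫⁻ x in U, (‖x - z‖ₑ ^ (1 - (n : ℝ))) ^ p ≤ M := by
    intro z hz
    have hsub : U ⊆ (fun x => x - z) ⁻¹' Metric.ball 0 ρ := by
      intro x hx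
      have h1 := mem_ball_zero_iff.mp (hr hx)
      have h2 := mem_ball_zero_iff.mp (hr hz)
      have h3 := norm_sub_le x z
      have h4 := le_max_left r 1
      rw [Set.mem_preimage, mem_ball_zero_iff]
      linarith
    refine (lintegral_mono_set hsub).trans (le_of_eq ?_)
    rw [← lintegral_indicator (measurableSet_ball.preimage (by fun_prop)), hM,
      ← lintegral_indicator measurableSet_ball,
      ← lintegral_sub_right_eq_self ((Metric.ball 0 ρ).indicator _) z]
    refine lintegral_congr fun x => ?_
    by_cases hx : x - z ∈ Metric.ball (0 : Fin n → ℝ) ρ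
    · rw [Set.indicator_of_mem hx, Set.indicator_of_mem (by exact hx), ← ENNReal.rpow_mul]
      congr 1
      ring
    · rw [Set.indicator_of_notMem hx, Set.indicator_of_notMem (by exact hx)]
  have hct : D * M ^ (1 / p) ≠ ⊤ :=
    ENNReal.mul_ne_top hD (ENNReal.rpow_ne_top_of_nonneg (by positivity) hMt.ne)
  refine ⟨(D * M ^ (1 / p)).toReal + 1, by positivity, fun v hv hvc hvU => ?_⟩
  have hDc : Continuous (fderiv ℝ v) := hv.continuous_fderiv one_ne_zero
  have hAc : Continuous (fun x => frobNorm (Aop n A v x)) := by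
    refine continuous_frobNorm.comp ?_
    refine continuous_finsetSum _ fun j _ => ?_
    exact (A j).continuous_of_finiteDimensional.comp (hDc.clm_apply continuous_const)
  have hA0 : ∀ x ∉ tsupport v, frobNorm (Aop n A v x) = 0 := by
    intro x hx
    have h : fderiv ℝ v x = 0 := by
      by_contra h
      exact hx (support_fderiv_subset ℝ h)
    simp [Aop, h, frobNorm]
  have hAcs : HasCompactSupport (fun x => frobNorm (Aop n A v x)) :=
    HasCompactSupport.intro hvc hA0
  have hAint : Integrable (fun x => frobNorm (Aop n A v x)) :=
    hAc.integrable_of_hasCompactSupport hAcs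
  have hAnn : ∀ x, 0 ≤ frobNorm (Aop n A v x) := fun x => Real.sqrt_nonneg _
  have hvnn : ∀ x, 0 ≤ vecNorm (v x) := fun x => Real.sqrt_nonneg _
  set J := ∫⁻ z, ENNReal.ofReal (frobNorm (Aop n A v z)) with hJ
  have hJU : ENNReal.ofReal (∫ x in U, frobNorm (Aop n A v x)) = J := by
    rw [setIntegral_eq_integral_of_forall_compl_eq_zero fun x hx => hA0 x fun h => hx (hvU h),
      ofReal_integral_eq_lintegral_ofReal hAint (Filter.Eventually.of_forall hAnn)]
  have hmain : ∫⁻ x in U, ENNReal.ofReal (vecNorm (v x)) ^ p ≤ D ^ p * (M * J ^ p) := by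
    calc ∫⁻ x in U, ENNReal.ofReal (vecNorm (v x)) ^ p
        ≤ ∫⁻ x in U, D ^ p * (∫⁻ z, ‖x - z‖ₑ ^ (1 - (n : ℝ)) *
            ENNReal.ofReal (frobNorm (Aop n A v z))) ^ p := by
          refine lintegral_mono fun x => ?_
          rw [← ENNReal.mul_rpow_of_nonneg _ _ hp0.le]
          exact ENNReal.rpow_le_rpow (hDv v hv hvc x) hp0.le
      _ = D ^ p * ∫⁻ x in U, (∫⁻ z, ‖x - z‖ₑ ^ (1 - (n : ℝ)) *
            ENNReal.ofReal (frobNorm (Aop n A v z))) ^ p :=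
          lintegral_const_mul' _ _ (ENNReal.rpow_ne_top_of_nonneg hp0.le hD)
      _ ≤ D ^ p * (M * J ^ p) := by
          gcongr
          refine lintegral_riesz_rpow_le (volume.restrict U) volume hp
            (R := fun x z => ‖x - z‖ₑ ^ (1 - (n : ℝ))) ?_
            hAc.measurable.ennreal_ofReal fun z hz => hMz z ?_
          · simp only [Function.uncurry_def]
            fun_prop
          · by_contra h
            exact hz (by rw [hA0 z fun h' => h (hvU h'), ENNReal.ofReal_zero])
  have hI : ENNReal.ofReal (∫ x in U, vecNorm (v x) ^ p)
      ≤ ∫⁻ x in U, ENNReal.ofReal (vecNorm (v x)) ^ p := by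
    rw [integral_eq_lintegral_of_nonneg_ae
      (Filter.Eventually.of_forall fun x => Real.rpow_nonneg (hvnn x) p)
      ((continuous_vecNorm.comp hv.continuous).rpow_const
        fun _ => Or.inr hp0.le).aestronglyMeasurable]
    refine ENNReal.ofReal_toReal_le.trans (le_of_eq (lintegral_congr fun x => ?_))
    rw [ENNReal.ofReal_rpow_of_nonneg (hvnn x) hp0.le]
  have hI0 : 0 ≤ ∫ x in U, vecNorm (v x) ^ p :=
    integral_nonneg fun x => Real.rpow_nonneg (hvnn x) p
  have hA0' : 0 ≤ ∫ x in U, frobNorm (Aop n A v x) := integral_nonneg hAnn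
  have hfin : ENNReal.ofReal ((∫ x in U, vecNorm (v x) ^ p) ^ (1 / p)) ≤ D * M ^ (1 / p) * J := by
    rw [← ENNReal.ofReal_rpow_of_nonneg hI0 (by positivity)]
    refine (ENNReal.rpow_le_rpow (hI.trans hmain) (by positivity)).trans (le_of_eq ?_)
    rw [ENNReal.mul_rpow_of_nonneg _ _ (by positivity),
      ENNReal.mul_rpow_of_nonneg _ _ (by positivity), ← ENNReal.rpow_mul, ← ENNReal.rpow_mul,
      mul_one_div_cancel hp0.ne', ENNReal.rpow_one, ENNReal.rpow_one, mul_assoc]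
  rw [← hJU, ← ENNReal.ofReal_toReal hct, ← ENNReal.ofReal_mul ENNReal.toReal_nonneg] at hfin
  refine ((ENNReal.ofReal_le_ofReal_iff (by positivity)).mp hfin).trans ?_
  gcongr
  linarith
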